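/- In G = SL(3, F₂), the stabilizer H of a nonzero vector in F₂³ (under the natural action) and the stabilizer K of a 2-dimensional subspace of F₂³ are almost conjugate but not conjugate subgroups of G. -/

import Mathlib

def AlmostConjugate {G : Type*} [Group G] (H K : Subgroup G) : Prop :=
  ∃ f : H ≃ K, ∀ h : H, IsConj (h : G) ((f h : K) : G)

open Matrix

set_option maxRecDepth 100000 in
set_option synthInstance.maxHeartbeats 400000 in
set_option synthInstance.maxSize 4000 in
set_option maxHeartbeats 4000000 in
/-- Entrywise form of: every invertible 3×3 matrix over F₂ is conjugate to its transpose, by a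
symmetric matrix. -/
theorem entry_transpose : ∀ a b c d e f g h i : Fin 2,
    a * e * i - a * f * h - b * d * i + b * f * g + c * d * h - c * e * g = 1 →
    ∃ p q r s t u : Fin 2,
      p * s * u - p * t * t - q * q * u + q * t * r + r * q * t - r * s * r = 1 ∧
      p * b + q * e + r * h = a * q + d * s + g * t ∧
      p * c + q * f + r * i = a * r + d * t + g * u ∧
      q * c + s * f + t * i = b * r + e * t + h * u := by
  decide +kernel

set_option maxRecDepth 100000 in
set_option synthInstance.maxHeartbeats 400000 in
set_option synthInstance.maxSize 4000 in
set_option maxHeartbeats 4000000 in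
theorem entry_transitive : ∀ x y z k l m : Fin 2, ¬ (x = 0 ∧ y = 0 ∧ z = 0) →
    ¬ (k = 0 ∧ l = 0 ∧ m = 0) → ∃ a b c d e f g h i : Fin 2,
    a * e * i - a * f * h - b * d * i + b * f * g + c * d * h - c * e * g = 1 ∧
    x * a + y * d + z * g = k ∧ x * b + y * e + z * h = l ∧ x * c + y * f + z * i = m := by
  decide +kernel

set_option maxRecDepth 100000 in
set_option synthInstance.maxHeartbeats 400000 in
set_option synthInstance.maxSize 4000 in
set_option maxHeartbeats 4000000 in
theorem entry_move : ∀ x y z k l m : Fin 2, ¬ (x = 0 ∧ y = 0 ∧ z = 0) →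
    ¬ (k = 0 ∧ l = 0 ∧ m = 0) → ∃ a b c d e f g h i : Fin 2,
    a * e * i - a * f * h - b * d * i + b * f * g + c * d * h - c * e * g = 1 ∧
    (x * a + y * d + z * g = x ∧ x * b + y * e + z * h = y ∧ x * c + y * f + z * i = z) ∧
    ¬ (a * k + b * l + c * m = k ∧ d * k + e * l + f * m = l ∧ g * k + h * l + i * m = m) := by
  decide +kernel

theorem entry_ker : ∀ x y z k l m : Fin 2, ¬ (k = 0 ∧ l = 0 ∧ m = 0) →
    (∀ p q r : Fin 2, x * p + y * q + z * r = 0 → k * p + l * q + m * r = 0) →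
    x = k ∧ y = l ∧ z = m := by
  decide +kernel

abbrev SL3 := SpecialLinearGroup (Fin 3) (ZMod 2)

theorem vec_eq_iff (v w : Fin 3 → ZMod 2) : v = w ↔ v 0 = w 0 ∧ v 1 = w 1 ∧ v 2 = w 2 := by
  rw [funext_iff, Fin.forall_fin_succ, Fin.forall_fin_succ, Fin.forall_fin_succ]
  simp

theorem SL_transpose (A : SL3) : ∃ S : SL3,
    (S : Matrix (Fin 3) (Fin 3) (ZMod 2)) * A = (A : Matrix (Fin 3) (Fin 3) (ZMod 2))ᵀ * S := by
  obtain ⟨p, q, r, s, t, u, h0, h1, h2, h3⟩ := entry_transpose (A 0 0) (A 0 1) (A 0 2)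
    (A 1 0) (A 1 1) (A 1 2) (A 2 0) (A 2 1) (A 2 2) (by
      have := A.det_coe
      rw [det_fin_three] at this
      exact this)
  change ZMod 2 at p q r s t u
  refine ⟨⟨!![p, q, r; q, s, t; r, t, u], ?_⟩, ?_⟩
  · rw [det_fin_three]; exact h0
  · replace h1 : p * A 0 1 + q * A 1 1 + r * A 2 1 = A 0 0 * q + A 1 0 * s + A 2 0 * t := h1
    replace h2 : p * A 0 2 + q * A 1 2 + r * A 2 2 = A 0 0 * r + A 1 0 * t + A 2 0 * u := h2
    replace h3 : q * A 0 2 + s * A 1 2 + t * A 2 2 = A 0 1 * r + A 1 1 * t + A 2 1 * u := h3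
    ext i j
    fin_cases i <;> fin_cases j <;>
      simp [Matrix.mul_apply, Fin.sum_univ_three] <;>
      first
      | ring1
      | linear_combination h1
      | linear_combination -h1
      | linear_combination h2
      | linear_combination -h2
      | linear_combination h3
      | linear_combination -h3

theorem SL_transitive (w v : Fin 3 → ZMod 2) (hw : w ≠ 0) (hv : v ≠ 0) :
    ∃ A : SL3, w ᵥ* (A : Matrix (Fin 3) (Fin 3) (ZMod 2)) = v := by
  rw [Ne, vec_eq_iff] at hw hv
  obtain ⟨a, b, c, d, e, f, g, h, i, h0, h1⟩ :=
    entry_transitive (w 0) (w 1) (w 2) (v 0) (v 1) (v 2) hw hv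
  change ZMod 2 at a b c d e f g h i
  refine ⟨⟨!![a, b, c; d, e, f; g, h, i], ?_⟩, ?_⟩
  · rw [det_fin_three]; exact h0
  · rw [vec_eq_iff]
    simp only [Matrix.vecMul, dotProduct, Fin.sum_univ_three]
    exact h1

theorem SL_move (w u : Fin 3 → ZMod 2) (hw : w ≠ 0) (hu : u ≠ 0) :
    ∃ A : SL3, w ᵥ* (A : Matrix (Fin 3) (Fin 3) (ZMod 2)) = w ∧
      (A : Matrix (Fin 3) (Fin 3) (ZMod 2)) *ᵥ u ≠ u := by
  rw [Ne, vec_eq_iff] at hw hu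
  obtain ⟨a, b, c, d, e, f, g, h, i, h0, h1, h2⟩ :=
    entry_move (w 0) (w 1) (w 2) (u 0) (u 1) (u 2) hw hu
  change ZMod 2 at a b c d e f g h i
  refine ⟨⟨!![a, b, c; d, e, f; g, h, i], ?_⟩, ?_, ?_⟩
  · rw [det_fin_three]; exact h0
  · rw [vec_eq_iff]
    simp only [Matrix.vecMul, dotProduct, Fin.sum_univ_three]
    exact h1
  · rw [Ne, vec_eq_iff]
    simp only [Matrix.mulVec, dotProduct, Fin.sum_univ_three]
    exact h2

theorem eq_of_ker (w u : Fin 3 → ZMod 2) (hu : u ≠ 0)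
    (h : ∀ x, w ⬝ᵥ x = 0 → u ⬝ᵥ x = 0) : w = u := by
  rw [Ne, vec_eq_iff] at hu
  rw [vec_eq_iff]
  refine entry_ker (w 0) (w 1) (w 2) (u 0) (u 1) (u 2) hu fun p q r hp => ?_
  have := h ![(p : ZMod 2), (q : ZMod 2), (r : ZMod 2)]
  simp only [dotProduct, Fin.sum_univ_three] at this
  exact this hp

theorem exists_functional (W : Submodule (ZMod 2) (Fin 3 → ZMod 2))
    (hW : Module.finrank (ZMod 2) W = 2) :
    ∃ w : Fin 3 → ZMod 2, w ≠ 0 ∧ ∀ x, x ∈ W ↔ w ⬝ᵥ x = 0 := by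
  have hlt : W < ⊤ := by
    rw [lt_top_iff_ne_top]
    rintro rfl
    simp at hW
  obtain ⟨f, hf, hle⟩ := Submodule.exists_le_ker_of_lt_top W hlt
  have hk : W = LinearMap.ker f := by
    apply Submodule.eq_of_le_of_finrank_eq hle
    have h1 := Module.Dual.finrank_ker_add_one_of_ne_zero hf
    simp at h1
    omega
  have hfx : ∀ x, f x = (fun i => f (Pi.single i 1)) ⬝ᵥ x := by
    intro x
    rw [LinearMap.pi_apply_eq_sum_univ f x]
    simp only [dotProduct, smul_eq_mul]
    refine Finset.sum_congr rfl fun i _ => ?_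
    rw [mul_comm]
    congr 2
    ext j
    simp [Pi.single_apply, eq_comm]
  refine ⟨fun i => f (Pi.single i 1), ?_, fun x => ?_⟩
  · intro h0
    apply hf
    refine LinearMap.ext fun x => ?_
    rw [hfx x, h0, zero_dotProduct, LinearMap.zero_apply]
  · rw [← hfx, hk, LinearMap.mem_ker]

theorem SL_mul_inv (g : SL3) : (g : Matrix (Fin 3) (Fin 3) (ZMod 2)) *
    (g⁻¹ : SL3).1 = 1 := by
  exact congrArg Subtype.val (mul_inv_cancel g)

theorem SL_inv_mul (g : SL3) : (g⁻¹ : SL3).1 * (g : Matrix (Fin 3) (Fin 3) (ZMod 2)) = 1 := by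
  exact congrArg Subtype.val (inv_mul_cancel g)

theorem stab_iff (W : Submodule (ZMod 2) (Fin 3 → ZMod 2)) (w : Fin 3 → ZMod 2) (hw : w ≠ 0)
    (hW : ∀ x, x ∈ W ↔ w ⬝ᵥ x = 0) (g : SL3) :
    W.map (mulVecLin (g : Matrix (Fin 3) (Fin 3) (ZMod 2))) = W ↔ w ᵥ* g.1 = w := by
  constructor
  · intro h
    symm
    apply eq_of_ker
    · intro h0
      apply hw
      rw [← vecMul_one w, ← SL_mul_inv g, ← vecMul_vecMul, h0, zero_vecMul]
    · intro x hx
      rw [← hW] at hx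
      rw [← dotProduct_mulVec, ← hW, ← h]
      exact ⟨x, hx, rfl⟩
  · intro h
    ext x
    rw [Submodule.mem_map]
    constructor
    · rintro ⟨y, hy, rfl⟩
      rw [hW] at hy ⊢
      rw [mulVecLin_apply, dotProduct_mulVec, h, hy]
    · intro hx
      refine ⟨(g⁻¹ : SL3).1 *ᵥ x, ?_, ?_⟩
      · rw [hW] at hx ⊢
        rw [← h, ← dotProduct_mulVec, mulVec_mulVec, SL_mul_inv, one_mulVec, hx]
      · rw [mulVecLin_apply, mulVec_mulVec, SL_mul_inv, one_mulVec]

/-- In SL(3,F₂), the stabilizer of a nonzero vector and the stabilizer of a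
2-dimensional subspace are almost conjugate but not conjugate. -/
theorem SL3F2_vector_plane_stabilizers_almostConjugate_not_conjugate
    (v : Fin 3 → ZMod 2) (hv : v ≠ 0)
    (W : Submodule (ZMod 2) (Fin 3 → ZMod 2)) (hW : Module.finrank (ZMod 2) W = 2)
    (H K : Subgroup (Matrix.SpecialLinearGroup (Fin 3) (ZMod 2)))
    (hH : ∀ g : Matrix.SpecialLinearGroup (Fin 3) (ZMod 2),
      g ∈ H ↔ Matrix.mulVec (g : Matrix (Fin 3) (Fin 3) (ZMod 2)) v = v)
    (hK : ∀ g : Matrix.SpecialLinearGroup (Fin 3) (ZMod 2),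
      g ∈ K ↔ W.map (Matrix.mulVecLin (g : Matrix (Fin 3) (Fin 3) (ZMod 2))) = W) :
    AlmostConjugate H K ∧
      ¬ ∃ g : Matrix.SpecialLinearGroup (Fin 3) (ZMod 2),
        Subgroup.map (MulAut.conj g).toMonoidHom H = K := by
  obtain ⟨w, hw, hWw⟩ := exists_functional W hW
  replace hK : ∀ g : SL3, g ∈ K ↔ w ᵥ* g.1 = w := fun g => (hK g).trans (stab_iff W w hw hWw g)
  constructor
  · obtain ⟨a, ha⟩ := SL_transitive w v hw hv
    have ha' : v ᵥ* (a⁻¹ : SL3).1 = w := by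
      rw [← ha, vecMul_vecMul, SL_mul_inv, vecMul_one]
    let e : SL3 ≃ SL3 :=
      { toFun := fun h => a * h.transpose * a⁻¹
        invFun := fun k => (a⁻¹ * k * a).transpose
        left_inv := fun h => by
          have : a⁻¹ * (a * h.transpose * a⁻¹) * a = h.transpose := by group
          simp only [this]
          ext i j; rfl
        right_inv := fun k => by
          have : (a⁻¹ * k * a).transpose.transpose = a⁻¹ * k * a := by ext i j; rfl
          simp only [this]
          group }
    have he : ∀ h, h ∈ H ↔ e h ∈ K := by
      intro h
      rw [hH, hK]
      change _ ↔ w ᵥ* (a.1 * h.1ᵀ * (a⁻¹ : SL3).1) = w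
      rw [← vecMul_vecMul, ← vecMul_vecMul, ha, vecMul_transpose]
      constructor
      · intro h1; rw [h1, ha']
      · intro h1
        have := congrArg (· ᵥ* a.1) h1
        simpa only [vecMul_vecMul, Matrix.mul_assoc, SL_inv_mul, vecMul_one, ha] using this
    refine ⟨e.subtypeEquiv he, fun h => ?_⟩
    obtain ⟨S, hS⟩ := SL_transpose h.1
    rw [isConj_iff]
    refine ⟨a * S, ?_⟩
    have hS' : S * h.1 = h.1.transpose * S := Subtype.ext hS
    change a * S * h.1 * (a * S)⁻¹ = a * h.1.transpose * a⁻¹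
    rw [mul_assoc a, hS']
    group
  · rintro ⟨g, hg⟩
    have hu : g.1 *ᵥ v ≠ 0 := by
      intro h0
      apply hv
      rw [← one_mulVec v, ← SL_inv_mul g, ← mulVec_mulVec, h0, mulVec_zero]
    obtain ⟨k, hk, hne⟩ := SL_move w _ hw hu
    rw [← hK, ← hg] at hk
    obtain ⟨h, hh, rfl⟩ := hk
    apply hne
    have hh' := (hH h).1 hh
    change (g.1 * h.1 * (g⁻¹ : SL3).1) *ᵥ (g.1 *ᵥ v) = g.1 *ᵥ v
    rw [mulVec_mulVec, Matrix.mul_assoc, SL_inv_mul, Matrix.mul_one, ← mulVec_mulVec, hh']
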